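/- arXiv:2209.10036 — 10 statements merged into one kernel-verified Lean document; each statement's English description precedes it below -/
import Mathlib

section
/- Let f : M → X be a continuous map between topological spaces and let A ⊆ X be a subset that is both compact and closed and satisfies A ∩ Bd f = ∅. Then the preimage f⁻¹(A) is a compact subset of M. -/
open Set

/-- The boundary of a map `f : M → X`: the intersection, over all compact subsets
`K ⊆ M`, of the closures in `X` of the images `f(M \ K)`. -/
def mapBd {M X : Type*} [TopologicalSpace M] [TopologicalSpace X] (f : M → X) : Set X :=
  ⋂ (K : Set M) (_ : IsCompact K), closure (f '' Kᶜ)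

theorem preimage_compact_of_disjoint_mapBd
    {M X : Type*} [TopologicalSpace M] [TopologicalSpace X]
    (f : M → X) (hf : Continuous f)
    (A : Set X) (hAcomp : IsCompact A) (hAcl : IsClosed A)
    (hdisj : A ∩ mapBd f = ∅) :
    IsCompact (f ⁻¹' A) := by
  have key : ∃ K : Set M, IsCompact K ∧ f ⁻¹' A ⊆ K := by
    refine hAcomp.induction_on (p := fun s => ∃ K : Set M, IsCompact K ∧ f ⁻¹' s ⊆ K) ?_ ?_ ?_ ?_
    · exact ⟨∅, isCompact_empty, by simp⟩
    · rintro s t hst ⟨K, hK, h⟩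
      exact ⟨K, hK, (preimage_mono hst).trans h⟩
    · rintro s t ⟨K, hK, h⟩ ⟨L, hL, h'⟩
      exact ⟨K ∪ L, hK.union hL, by rw [preimage_union]; exact union_subset_union h h'⟩
    · intro x hx
      have hx' : x ∉ mapBd f := fun h => by
        have : x ∈ A ∩ mapBd f := ⟨hx, h⟩
        rw [hdisj] at this
        exact this
      simp only [mapBd, mem_iInter, not_forall] at hx'
      obtain ⟨K, hK, hxK⟩ := hx'
      refine ⟨(closure (f '' Kᶜ))ᶜ,
        mem_nhdsWithin_of_mem_nhds (isClosed_closure.isOpen_compl.mem_nhds hxK), K, hK, ?_⟩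
      intro m hm
      by_contra hmK
      exact hm (subset_closure ⟨m, hmK, rfl⟩)
  obtain ⟨K, hK, h⟩ := key
  exact hK.of_isClosed_subset (hAcl.preimage hf) h
end

section
/- Let f : M → X be a continuous map between topological spaces with X Hausdorff. If Bd f = ∅, then f is proper, i.e. f⁻¹(A) is compact for every compact subset A ⊆ X. -/
open Set

theorem proper_of_mapBd_empty
    {M X : Type*} [TopologicalSpace M] [TopologicalSpace X] [T2Space X]
    (f : M → X) (hf : Continuous f) (hbd : mapBd f = ∅) :
    ∀ A : Set X, IsCompact A → IsCompact (f ⁻¹' A) := by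
  intro A hA
  have h : ∃ K : Set M, IsCompact K ∧ f ⁻¹' A ⊆ K := by
    refine hA.induction_on (p := fun A => ∃ K : Set M, IsCompact K ∧ f ⁻¹' A ⊆ K) ?_ ?_ ?_ ?_
    · exact ⟨∅, isCompact_empty, by simp⟩
    · rintro s t hst ⟨K, hK, h⟩
      exact ⟨K, hK, (preimage_mono hst).trans h⟩
    · rintro s t ⟨K, hK, h⟩ ⟨L, hL, h2⟩
      exact ⟨K ∪ L, hK.union hL, by rw [preimage_union]; exact union_subset_union h h2⟩
    · intro x _
      have hx : x ∉ mapBd f := by rw [hbd]; exact notMem_empty x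
      simp only [mapBd, mem_iInter, not_forall] at hx
      obtain ⟨K, hK, hxK⟩ := hx
      refine ⟨(closure (f '' Kᶜ))ᶜ,
        mem_nhdsWithin_of_mem_nhds (isClosed_closure.isOpen_compl.mem_nhds hxK), K, hK, ?_⟩
      intro m hm
      by_contra hmK
      exact hm (subset_closure ⟨m, hmK, rfl⟩)
  obtain ⟨K, hK, hsub⟩ := h
  exact hK.of_isClosed_subset (hA.isClosed.preimage hf) hsub
end

section
/- (Lemma 1.5(1)) Let f : M → X be a continuous map between topological spaces with X Hausdorff, and let U ⊆ X be an open set with Bd f ⊆ U. Then the restriction of f to M \ f⁻¹(U) is proper: for every compact subset A ⊆ X, the set (M \ f⁻¹(U)) ∩ f⁻¹(A) is compact. -/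
open Set

theorem restriction_proper_of_nbhd_of_mapBd
    {M X : Type*} [TopologicalSpace M] [TopologicalSpace X] [T2Space X]
    (f : M → X) (hf : Continuous f)
    (U : Set X) (hU : IsOpen U) (hBdU : mapBd f ⊆ U) :
    ∀ A : Set X, IsCompact A → IsCompact ((f ⁻¹' U)ᶜ ∩ f ⁻¹' A) := by
  intro A hA
  have hC : IsCompact (A \ U) := hA.diff hU
  have key : ∃ K : Set M, IsCompact K ∧ f ⁻¹' (A \ U) ⊆ K := by
    refine hC.induction_on (p := fun s => ∃ K : Set M, IsCompact K ∧ f ⁻¹' s ⊆ K)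
      ⟨∅, isCompact_empty, by simp⟩ ?_ ?_ ?_
    · rintro s t hst ⟨K, hK, h⟩
      exact ⟨K, hK, (preimage_mono hst).trans h⟩
    · rintro s t ⟨K, hK, h⟩ ⟨L, hL, h'⟩
      exact ⟨K ∪ L, hK.union hL, union_subset_union h h'⟩
    · intro x hx
      have hxB : x ∉ mapBd f := fun h => hx.2 (hBdU h)
      simp only [mapBd, mem_iInter, not_forall] at hxB
      obtain ⟨K, hK, hxK⟩ := hxB
      refine ⟨(closure (f '' Kᶜ))ᶜ,
        mem_nhdsWithin_of_mem_nhds (isClosed_closure.isOpen_compl.mem_nhds hxK), K, hK, ?_⟩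
      intro m hm
      by_contra hmK
      exact hm (subset_closure ⟨m, hmK, rfl⟩)
  obtain ⟨K, hK, h⟩ := key
  have hcl : IsClosed ((f ⁻¹' U)ᶜ ∩ f ⁻¹' A) :=
    (hU.preimage hf).isClosed_compl.inter (hA.isClosed.preimage hf)
  exact hK.of_isClosed_subset hcl fun m hm => h ⟨hm.2, hm.1⟩
end

section
/- (Lemma 1.5(2)) Let f : M → X be a continuous map between topological spaces, where X is Hausdorff and locally compact (every point of X has a compact neighborhood). Then for every subset B ⊆ M, the boundary of the restriction f|_{M \ B} satisfies Bd(f|_{M \ B}) ⊆ (Bd f) ∪ closure(f(B)); explicitly, ⋂_{K} closure(f((M \ B) \ K)) ⊆ (Bd f) ∪ closure(f(B)), where the intersection is over all subsets K of M \ B that are compact (in the subspace topology of M \ B) and all closures are taken in X. -/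
open Set

theorem mapBd_restriction_subset
    {M X : Type*} [TopologicalSpace M] [TopologicalSpace X] [T2Space X]
    (f : M → X) (hf : Continuous f)
    (hloc : ∀ x : X, ∃ K ∈ nhds x, IsCompact K)
    (B : Set M) :
    (⋂ (K : Set M) (_ : K ⊆ Bᶜ) (_ : IsCompact K), closure (f '' (Bᶜ \ K)))
      ⊆ mapBd f ∪ closure (f '' B) := by
  intro x hx
  by_contra hcon
  simp only [mapBd, mem_union, mem_iInter, not_or, not_forall] at hcon
  obtain ⟨⟨K, hK, hxK⟩, hxB⟩ := hcon
  haveI : WeaklyLocallyCompactSpace X :=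
    ⟨fun x => let ⟨K, h1, h2⟩ := hloc x; ⟨K, h2, h1⟩⟩
  obtain ⟨V, ⟨hVx, hVc⟩, hVB⟩ := (closed_nhds_basis x).mem_iff.1
    (isClosed_closure.isOpen_compl.mem_nhds hxB)
  simp only [mem_iInter] at hx
  have hmem := hx (K ∩ f ⁻¹' V)
    (fun y hy hyB => hVB hy.2 (subset_closure (mem_image_of_mem f hyB)))
    (hK.inter_right (hVc.preimage hf))
  obtain ⟨z, ⟨hzV, hzK⟩, y, hy, rfl⟩ := mem_closure_iff_nhds.1 hmem
    (V ∩ (closure (f '' Kᶜ))ᶜ)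
    (Filter.inter_mem hVx (isClosed_closure.isOpen_compl.mem_nhds hxK))
  exact hzK (subset_closure (mem_image_of_mem f (fun hyK => hy.2 ⟨hyK, hzV⟩)))
end

section
/- (Lemma 1.5(5)) Let f : M → X be a continuous map between topological spaces. Suppose X is Hausdorff and admits a family (A_i)_{i ∈ I} of compact subsets covering X that is locally finite (every point of X has a neighborhood meeting A_i for only finitely many i ∈ I). Suppose M is Hausdorff, normal, and locally compact (every point of M has a compact neighborhood), and let B ⊆ M be a closed subset such that the restriction f|_B is proper (for every compact A ⊆ X, the set B ∩ f⁻¹(A) is compact). Then there exists an open set W ⊆ M with B ⊆ W such that the restriction of f to closure(W) is still proper: for every compact A ⊆ X, the set closure(W) ∩ f⁻¹(A) is compact. -/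
open Set

theorem proper_extension_neighborhood
    {M X : Type*} [TopologicalSpace M] [TopologicalSpace X]
    [T2Space X] [T2Space M] [NormalSpace M]
    (hlocM : ∀ x : M, ∃ K ∈ nhds x, IsCompact K)
    {I : Type*} (A : I → Set X) (hAcomp : ∀ i, IsCompact (A i))
    (hcover : (⋃ i, A i) = Set.univ) (hlf : LocallyFinite A)
    (f : M → X) (hf : Continuous f)
    (B : Set M) (hB : IsClosed B)
    (hprop : ∀ K : Set X, IsCompact K → IsCompact (B ∩ f ⁻¹' K)) :
    ∃ W : Set M, IsOpen W ∧ B ⊆ W ∧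
      ∀ K : Set X, IsCompact K → IsCompact (closure W ∩ f ⁻¹' K) := by
  haveI : WeaklyLocallyCompactSpace M :=
    ⟨fun x => by obtain ⟨K, h1, h2⟩ := hlocM x; exact ⟨K, h2, h1⟩⟩
  choose L hLc hL using fun i => exists_compact_superset (hprop (A i) (hAcomp i))
  have hlf2 : LocallyFinite (fun i => f ⁻¹' (A i) \ interior (L i)) :=
    (hlf.preimage_continuous hf).subset (fun i => diff_subset)
  have hC : IsClosed (⋃ i, f ⁻¹' (A i) \ interior (L i)) :=
    hlf2.isClosed_iUnion fun i =>
      ((hAcomp i).isClosed.preimage hf).sdiff isOpen_interior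
  have hBC : B ⊆ (⋃ i, f ⁻¹' (A i) \ interior (L i))ᶜ := by
    intro x hx hxC
    obtain ⟨i, h1, h2⟩ := mem_iUnion.1 hxC
    exact h2 (hL i ⟨hx, h1⟩)
  obtain ⟨W, hWo, hBW, hW⟩ := normal_exists_closure_subset hB hC.isOpen_compl hBC
  refine ⟨W, hWo, hBW, fun K hK => ?_⟩
  have hfin := hlf.finite_nonempty_inter_compact hK
  refine (hfin.isCompact_biUnion fun i _ => hLc i).of_isClosed_subset
    (isClosed_closure.inter (hK.isClosed.preimage hf)) ?_
  rintro x ⟨hxW, hxK⟩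
  obtain ⟨i, hi⟩ := mem_iUnion.1 (hcover.symm ▸ mem_univ (f x) : f x ∈ ⋃ i, A i)
  refine mem_biUnion (show i ∈ {i | (A i ∩ K).Nonempty} from ⟨f x, hi, hxK⟩) ?_
  by_contra h
  exact hW hxW (mem_iUnion.2 ⟨i, hi, fun h' => h (interior_subset h')⟩)
end

section
/- (Lemma 2.3, finiteness part) Let R be a commutative ring, X a topological space, k, p ≥ 0, and let h be a rigid map of degree (k,p) on X. Then for every Borel–Moore k-chain c on X with coefficients in R and every singular p-simplex τ of X, the set {σ : σ is a singular k-simplex of X, c(σ) ≠ 0 and h(σ)(τ) ≠ 0} is finite. -/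
open Set

noncomputable section

/-- The standard `k`-simplex, as a topological space. -/
abbrev Δ (k : ℕ) : Type := ↥(stdSimplex ℝ (Fin (k+1)))

/-- A singular `k`-simplex in `X`: a continuous map from the standard `k`-simplex. -/
abbrev SSimplex (X : Type*) [TopologicalSpace X] (k : ℕ) : Type _ := C(Δ k, X)

/-- A Borel–Moore (locally finite) `k`-chain on `X` with coefficients in `R`:
every point has an open neighborhood met by the images of only finitely many
simplices with nonzero coefficient. -/
def IsBMChain {X : Type*} [TopologicalSpace X] {R : Type*} [CommRing R] (k : ℕ)
    (c : SSimplex X k → R) : Prop :=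
  ∀ x : X, ∃ U : Set X, IsOpen U ∧ x ∈ U ∧
    {σ : SSimplex X k | c σ ≠ 0 ∧ (Set.range ⇑σ ∩ U).Nonempty}.Finite

/-- The support of a `k`-chain: the union of the images of the simplices with
nonzero coefficient. -/
def bmSupp {X : Type*} [TopologicalSpace X] {R : Type*} [CommRing R] (k : ℕ)
    (c : SSimplex X k → R) : Set X :=
  ⋃ (σ : SSimplex X k) (_ : c σ ≠ 0), Set.range ⇑σ

/-- A rigid map of degree `(k,p)` on `X`: each value is a Borel–Moore `p`-chain
supported inside the image of the input simplex. -/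
def IsRigid {X : Type*} [TopologicalSpace X] {R : Type*} [CommRing R] (k p : ℕ)
    (h : SSimplex X k → SSimplex X p → R) : Prop :=
  ∀ σ : SSimplex X k, IsBMChain p (h σ) ∧ bmSupp p (h σ) ⊆ Set.range ⇑σ

theorem rigid_apply_finite_support
    {X : Type*} [TopologicalSpace X] {R : Type*} [CommRing R] (k p : ℕ)
    (h : SSimplex X k → SSimplex X p → R) (hrig : IsRigid k p h)
    (c : SSimplex X k → R) (hc : IsBMChain k c) (τ : SSimplex X p) :
    {σ : SSimplex X k | c σ ≠ 0 ∧ h σ τ ≠ 0}.Finite := by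
  let v : Δ p := ⟨Pi.single 0 1, single_mem_stdSimplex ℝ 0⟩
  obtain ⟨U, -, hxU, hfin⟩ := hc (τ v)
  refine hfin.subset ?_
  rintro σ ⟨h1, h2⟩
  refine ⟨h1, τ v, (hrig σ).2 ?_, hxU⟩
  exact Set.mem_iUnion₂.2 ⟨τ, h2, Set.mem_range_self v⟩

end
end

section
/- (Lemma 2.3, local finiteness part) Let R be a commutative ring, X a topological space, k, p ≥ 0, and let h be a rigid map of degree (k,p) on X. Let c be a Borel–Moore k-chain on X with coefficients in R. Then the function h(c), sending each singular p-simplex τ of X to the sum ∑_σ c(σ)·h(σ)(τ) taken over the (finitely many) singular k-simplices σ with c(σ) ≠ 0 and h(σ)(τ) ≠ 0, is a Borel–Moore p-chain on X with coefficients in R. -/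
open Set

noncomputable section

theorem rigid_extension_isBMChain
    {X : Type*} [TopologicalSpace X] {R : Type*} [CommRing R] (k p : ℕ)
    (h : SSimplex X k → SSimplex X p → R) (hrig : IsRigid k p h)
    (c : SSimplex X k → R) (hc : IsBMChain k c) :
    IsBMChain p (fun τ : SSimplex X p => ∑ᶠ σ : SSimplex X k, c σ * h σ τ) := by
  intro x
  obtain ⟨U, hU, hxU, hF⟩ := hc x
  choose V hV hxV hVF using fun σ => (hrig σ).1 x
  refine ⟨U ∩ ⋂ σ ∈ {σ : SSimplex X k | c σ ≠ 0 ∧ (Set.range ⇑σ ∩ U).Nonempty}, V σ,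
    hU.inter (hF.isOpen_biInter fun σ _ => hV σ),
    ⟨hxU, Set.mem_iInter₂.2 fun σ _ => hxV σ⟩, ?_⟩
  refine (hF.biUnion fun σ _ => hVF σ).subset ?_
  rintro τ ⟨hτ, y, hy, hyU, hyV⟩
  have hex : ∃ σ : SSimplex X k, c σ * h σ τ ≠ 0 := by
    by_contra hcon
    push Not at hcon
    exact hτ (by simp [hcon])
  obtain ⟨σ, hσ⟩ := hex
  have h1 : c σ ≠ 0 := left_ne_zero_of_mul hσ
  have h2 : h σ τ ≠ 0 := right_ne_zero_of_mul hσ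
  have hyσ : y ∈ Set.range ⇑σ := (hrig σ).2 (Set.mem_iUnion₂.2 ⟨τ, h2, hy⟩)
  have hm : σ ∈ {σ : SSimplex X k | c σ ≠ 0 ∧ (Set.range ⇑σ ∩ U).Nonempty} :=
    ⟨h1, y, hyσ, hyU⟩
  exact Set.mem_biUnion hm ⟨h2, y, hy, Set.mem_iInter₂.1 hyV σ hm⟩

end
end

section
/- (Lemma 2.6, fiber finiteness) Let R be a commutative ring, let f : X → X' be a continuous proper map between topological spaces (f⁻¹(A) is compact for every compact A ⊆ X'), let k ≥ 0, and let c be a Borel–Moore k-chain on X with coefficients in R. Then for every singular k-simplex τ of X', the set {σ | σ is a singular k-simplex of X, c(σ) ≠ 0 and f ∘ σ = τ} is finite. -/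
open Set

noncomputable section

theorem proper_pushforward_fiber_finite
    {X X' : Type*} [TopologicalSpace X] [TopologicalSpace X'] {R : Type*} [CommRing R]
    (f : X → X') (hf : Continuous f)
    (hprop : ∀ A : Set X', IsCompact A → IsCompact (f ⁻¹' A))
    (k : ℕ) (c : SSimplex X k → R) (hc : IsBMChain k c) (τ : SSimplex X' k) :
    {σ : SSimplex X k | c σ ≠ 0 ∧ f ∘ ⇑σ = ⇑τ}.Finite := by
  classical
  have hK := hprop (Set.range ⇑τ) (isCompact_range τ.continuous)
  choose U hUo hxU hfin using hc
  obtain ⟨t, -, ht⟩ := hK.elim_nhds_subcover U (fun x _ => (hUo x).mem_nhds (hxU x))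
  refine (t.finite_toSet.biUnion (fun x _ => hfin x)).subset ?_
  rintro σ ⟨hσ, he⟩
  let p : Δ k := ⟨Pi.single 0 1, single_mem_stdSimplex ℝ 0⟩
  have hp : σ p ∈ f ⁻¹' (Set.range ⇑τ) := ⟨p, (congrFun he p).symm⟩
  obtain ⟨x, hx, hpx⟩ := Set.mem_iUnion₂.1 (ht hp)
  exact Set.mem_iUnion₂.2 ⟨x, hx, hσ, σ p, ⟨p, rfl⟩, hpx⟩

end
end

section
/- (Lemma 2.6, pushforward) Let R be a commutative ring, let f : X → X' be a continuous proper map between topological spaces (f⁻¹(A) is compact for every compact A ⊆ X'), and suppose every point of X' has an open neighborhood whose closure in X' is compact. Let k ≥ 0 and let c be a Borel–Moore k-chain on X with coefficients in R. Then the function f_#(c), sending each singular k-simplex τ of X' to ∑_σ c(σ) summed over the (finitely many) singular k-simplices σ of X with c(σ) ≠ 0 and f ∘ σ = τ, is a Borel–Moore k-chain on X' with coefficients in R; moreover, for every τ with f_#(c)(τ) ≠ 0 one has range(τ) ⊆ f(supp(c)). -/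
open Set

noncomputable section

attribute [local instance] Classical.propDecidable

theorem proper_pushforward_isBMChain
    {X X' : Type*} [TopologicalSpace X] [TopologicalSpace X'] {R : Type*} [CommRing R]
    (f : X → X') (hf : Continuous f)
    (hprop : ∀ A : Set X', IsCompact A → IsCompact (f ⁻¹' A))
    (hloc : ∀ x : X', ∃ U : Set X', IsOpen U ∧ x ∈ U ∧ IsCompact (closure U))
    (k : ℕ) (c : SSimplex X k → R) (hc : IsBMChain k c) :
    IsBMChain k (fun τ : SSimplex X' k =>
        ∑ᶠ σ : SSimplex X k, if f ∘ ⇑σ = ⇑τ then c σ else 0) ∧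
    ∀ τ : SSimplex X' k,
      (∑ᶠ σ : SSimplex X k, if f ∘ ⇑σ = ⇑τ then c σ else 0) ≠ 0 →
      Set.range ⇑τ ⊆ f '' bmSupp k c := by
  have key : ∀ τ : SSimplex X' k,
      (∑ᶠ σ : SSimplex X k, if f ∘ ⇑σ = ⇑τ then c σ else 0) ≠ 0 →
      ∃ σ : SSimplex X k, f ∘ ⇑σ = ⇑τ ∧ c σ ≠ 0 := by
    intro τ hτ
    obtain ⟨σ, hσ⟩ : ∃ σ : SSimplex X k, (if f ∘ ⇑σ = ⇑τ then c σ else 0) ≠ 0 := by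
      by_contra! h
      exact hτ (finsum_eq_zero_of_forall_eq_zero h)
    by_cases h : f ∘ ⇑σ = ⇑τ
    · exact ⟨σ, h, by simpa [h] using hσ⟩
    · simp [h] at hσ
  refine ⟨?_, ?_⟩
  · intro y
    obtain ⟨V, hVo, hyV, hVc⟩ := hloc y
    refine ⟨V, hVo, hyV, ?_⟩
    choose U hUo hxU hUf using hc
    obtain ⟨t, ht⟩ := (hprop _ hVc).elim_finite_subcover U hUo
      (fun x _ => mem_iUnion.2 ⟨x, hxU x⟩)
    have hfin := t.finite_toSet.biUnion (fun x _ => hUf x)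
    refine (hfin.image (fun σ : SSimplex X k => (⟨f ∘ ⇑σ, hf.comp σ.continuous⟩ :
      SSimplex X' k))).subset ?_
    rintro τ ⟨hτ, z, ⟨p, rfl⟩, hz⟩
    obtain ⟨σ, hσ, hcσ⟩ := key τ hτ
    have hp : f (σ p) = τ p := congrFun hσ p
    have hm : σ p ∈ f ⁻¹' closure V := by
      rw [mem_preimage, hp]
      exact subset_closure hz
    obtain ⟨x, hx, hpx⟩ := mem_iUnion₂.1 (ht hm)
    refine ⟨σ, mem_iUnion₂.2 ⟨x, hx, hcσ, σ p, ⟨p, rfl⟩, hpx⟩, ?_⟩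
    ext q
    exact congrFun hσ q
  · rintro τ hτ _ ⟨p, rfl⟩
    obtain ⟨σ, hσ, hcσ⟩ := key τ hτ
    exact ⟨σ p, mem_iUnion₂.2 ⟨σ, hcσ, p, rfl⟩, congrFun hσ p⟩

end
end

section
/- (Lemma 2.1, first map) Let k ≥ 1. There exists a continuous map φ_k : Δ^k → Δ^k such that: (i) φ_k is smooth (C^∞) on Δ^k \ Y, where Y ⊂ Δ^k is the (k−2)-skeleton of Δ^k, i.e. the union of the convex hulls of all subsets of {e_0, e_1, …, e_k} of cardinality at most k−1; (ii) for every p ∈ {0, 1, …, k}, φ_k agrees with the projection π̃^k_p on U^k_p; and (iii) φ_k ∘ τ = τ ∘ φ_k for every permutation τ of {0, 1, …, k} acting on Δ^k. -/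
open Set

noncomputable section

/-- The vertices of the standard `k`-simplex in `ℝ^k`: `e_0 = 0` and `e_1, …, e_k`
the standard basis vectors (here `vtx k q` is `e_q` for `q : Fin (k+1)`). -/
def vtx (k : ℕ) (q : Fin (k+1)) : Fin k → ℝ := fun i => if (i : ℕ) + 1 = (q : ℕ) then 1 else 0

/-- The standard `k`-simplex `Δ^k ⊂ ℝ^k`: the convex hull of `e_0, e_1, …, e_k`. -/
def simplexSet (k : ℕ) : Set (Fin k → ℝ) := convexHull ℝ (Set.range (vtx k))

/-- The `(k-2)`-skeleton of `Δ^k`: the union of the convex hulls of all subsets of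
`{e_0, …, e_k}` of cardinality at most `k-1`. -/
def skel (k : ℕ) : Set (Fin k → ℝ) :=
  ⋃ (A : Finset (Fin (k+1))) (_ : A.card ≤ k - 1), convexHull ℝ (vtx k '' ↑A)

/-- The barycentric coordinates of a point `x` of `Δ^k`:
`t_0 = 1 - ∑ x_i` and `t_q = x_{q-1}` for `q ≥ 1`, so that `x = ∑_q t_q e_q`. -/
def baryCoord (k : ℕ) (x : Fin k → ℝ) (q : Fin (k+1)) : ℝ :=
  Fin.cases (1 - ∑ i, x i) (fun i => x i) q

/-- The barycenter `b_k = (1/(k+1)) ∑_q e_q` of `Δ^k`. -/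
def simplexBary (k : ℕ) : Fin k → ℝ := ((k : ℝ) + 1)⁻¹ • ∑ q, vtx k q

/-- `b'_{k;p} = (1/(k+1)) (b_k + ∑_{q ≠ p} e_q)`. -/
def bary' (k : ℕ) (p : Fin (k+1)) : Fin k → ℝ :=
  ((k : ℝ) + 1)⁻¹ • (simplexBary k + ∑ q ∈ Finset.univ.erase p, vtx k q)

/-- The set `U^k_p ⊆ Δ^k`. -/
def Upk (k : ℕ) (p : Fin (k+1)) : Set (Fin k → ℝ) :=
  { x | ∃ t : Fin (k+1) → ℝ,
      0 ≤ t p ∧ (∀ q, q ≠ p → 0 < t q) ∧ (∑ q, t q) = 1 ∧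
      x = t p • bary' k p + ∑ q ∈ Finset.univ.erase p, t q • vtx k q }

/-- The projection `π̃^k_p : Δ^k \ {e_p} → Δ^k_p`, sending `∑_q t_q e_q` to
`(1/(1-t_p)) ∑_{q ≠ p} t_q e_q`. -/
def projFace (k : ℕ) (p : Fin (k+1)) (x : Fin k → ℝ) : Fin k → ℝ :=
  (1 - baryCoord k x p)⁻¹ • (x - baryCoord k x p • vtx k p)

/-- The action of a permutation `τ` of `{0,…,k}` on `Δ^k`, as the restriction of the
affine map determined by `e_q ↦ e_{τ(q)}`. -/
def permAct (k : ℕ) (τ : Equiv.Perm (Fin (k+1))) (x : Fin k → ℝ) : Fin k → ℝ :=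
  ∑ q, baryCoord k x q • vtx k (τ q)

lemma comb_apply (k : ℕ) (t : Fin (k+1) → ℝ) (i : Fin k) :
    (∑ q, t q • vtx k q) i = t i.succ := by
  simp only [Finset.sum_apply, Pi.smul_apply, smul_eq_mul, vtx, mul_ite, mul_one, mul_zero]
  rw [Finset.sum_eq_single i.succ]
  · simp
  · intro b _ hb
    rw [if_neg]
    intro h
    apply hb
    ext
    simp [← h]
  · simp

lemma bary_comb (k : ℕ) (t : Fin (k+1) → ℝ) (ht : ∑ q, t q = 1) (q : Fin (k+1)) :
    baryCoord k (∑ q, t q • vtx k q) q = t q := by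
  refine Fin.cases ?_ (fun i => ?_) q
  · simp only [baryCoord, Fin.cases_zero, comb_apply]
    rw [Fin.sum_univ_succ] at ht
    linarith
  · simp only [baryCoord, Fin.cases_succ, comb_apply]

lemma bary_sum (k : ℕ) (x : Fin k → ℝ) : ∑ q, baryCoord k x q = 1 := by
  rw [Fin.sum_univ_succ]
  simp [baryCoord]

lemma comb_bary (k : ℕ) (x : Fin k → ℝ) : ∑ q, baryCoord k x q • vtx k q = x := by
  ext i
  rw [comb_apply]
  simp [baryCoord]

lemma comb_mem_hull (k : ℕ) (A : Finset (Fin (k+1))) (t : Fin (k+1) → ℝ) (h0 : ∀ q, 0 ≤ t q)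
    (ht : ∑ q, t q = 1) (hA : ∀ q, q ∉ A → t q = 0) :
    ∑ q, t q • vtx k q ∈ convexHull ℝ (vtx k '' (A : Set (Fin (k+1)))) := by
  have e1 : ∑ q, t q • vtx k q = ∑ q ∈ A, t q • vtx k q := by
    symm
    apply Finset.sum_subset (Finset.subset_univ _)
    intro q _ hq
    rw [hA q hq, zero_smul]
  have e2 : ∑ q ∈ A, t q = 1 := by
    rw [← ht]
    apply Finset.sum_subset (Finset.subset_univ _)
    intro q _ hq
    exact hA q hq
  rw [e1]
  apply (convex_convexHull ℝ _).sum_mem (fun q _ => h0 q) e2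
  intro q hq
  exact subset_convexHull ℝ _ ⟨q, hq, rfl⟩

lemma comb_mem (k : ℕ) (t : Fin (k+1) → ℝ) (h0 : ∀ q, 0 ≤ t q)
    (ht : ∑ q, t q = 1) : ∑ q, t q • vtx k q ∈ simplexSet k := by
  apply (convex_convexHull ℝ _).sum_mem (fun q _ => h0 q) ht
  intro q _
  exact subset_convexHull ℝ _ ⟨q, rfl⟩

lemma bary_nonneg (k : ℕ) (x : Fin k → ℝ) (hx : x ∈ simplexSet k) (q : Fin (k+1)) :
    0 ≤ baryCoord k x q := by
  unfold simplexSet at hx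
  rw [convexHull_range_eq_exists_affineCombination] at hx
  obtain ⟨s, w, h0, h1, rfl⟩ := hx
  rw [Finset.affineCombination_eq_linear_combination _ _ _ h1]
  have e1 : ∑ i ∈ s, w i • vtx k i = ∑ i, (if i ∈ s then w i else 0) • vtx k i := by
    simp [ite_smul]
  rw [e1, bary_comb]
  · split_ifs with h
    · exact h0 _ h
    · exact le_rfl
  · simpa using h1

lemma bary_contDiff (k : ℕ) (q : Fin (k+1)) :
    ContDiff ℝ (⊤ : ℕ∞) (fun x => baryCoord k x q) := by
  refine Fin.cases ?_ (fun i => ?_) q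
  · simp only [baryCoord, Fin.cases_zero]
    fun_prop
  · simp only [baryCoord, Fin.cases_succ]
    fun_prop

/-- cutoff: `1` if `a ≥ 3 b`, `0` if `a ≤ b`. -/
def chi (a b : ℝ) : ℝ := Real.smoothTransition (2 * ((a - b) / (a + b)))

/-- weights -/
def psi (k : ℕ) (s : Fin (k+1) → ℝ) (q : Fin (k+1)) : ℝ :=
  1 - ∏ r ∈ Finset.univ.erase q, chi (s r) (s q)

/-- the map in barycentric coordinates -/
def Fmap (k : ℕ) (s : Fin (k+1) → ℝ) (q : Fin (k+1)) : ℝ :=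
  (psi k s q * s q) / ∑ r, psi k s r * s r

lemma chi_zero {a b : ℝ} (h : 0 ≤ a) (hb : 0 ≤ b) (hab : a ≤ b) : chi a b = 0 := by
  apply Real.smoothTransition.zero_of_nonpos
  have : (a - b) / (a + b) ≤ 0 := div_nonpos_of_nonpos_of_nonneg (by linarith) (by linarith)
  linarith

lemma chi_one {a b : ℝ} (h : 0 < a) (hb : 0 ≤ b) (hab : 3 * b ≤ a) : chi a b = 1 := by
  apply Real.smoothTransition.one_of_one_le
  have : 1 / 2 ≤ (a - b) / (a + b) := by
    rw [div_le_div_iff₀ (by norm_num) (by linarith)]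
    linarith
  linarith

lemma psi_nonneg (k : ℕ) (s : Fin (k+1) → ℝ) (q : Fin (k+1)) : 0 ≤ psi k s q := by
  unfold psi
  have : ∏ r ∈ Finset.univ.erase q, chi (s r) (s q) ≤ 1 :=
    Finset.prod_le_one (fun _ _ => Real.smoothTransition.nonneg _)
      (fun _ _ => Real.smoothTransition.le_one _)
  linarith

lemma psi_le_one (k : ℕ) (s : Fin (k+1) → ℝ) (q : Fin (k+1)) : psi k s q ≤ 1 := by
  unfold psi
  have : 0 ≤ ∏ r ∈ Finset.univ.erase q, chi (s r) (s q) :=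
    Finset.prod_nonneg (fun _ _ => Real.smoothTransition.nonneg _)
  linarith

lemma psi_one {k : ℕ} {s : Fin (k+1) → ℝ} (h0 : ∀ q, 0 ≤ s q) {p q : Fin (k+1)} (hpq : p ≠ q)
    (h : s p ≤ s q) : psi k s q = 1 := by
  unfold psi
  rw [Finset.prod_eq_zero (i := p) (by simp [hpq]) (chi_zero (h0 p) (h0 q) h), sub_zero]

lemma den_pos {k : ℕ} (hk : 1 ≤ k) {s : Fin (k+1) → ℝ} (h0 : ∀ q, 0 ≤ s q)
    (h1 : ∑ q, s q = 1) : 0 < ∑ r, psi k s r * s r := by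
  obtain ⟨m, -, hm⟩ := Finset.exists_max_image Finset.univ s Finset.univ_nonempty
  have hmpos : 0 < s m := by
    by_contra hcon
    have : ∑ q, s q ≤ 0 := Finset.sum_nonpos (fun q hq => (hm q hq).trans (not_lt.mp hcon))
    linarith
  have : Nontrivial (Fin (k+1)) := Fin.nontrivial_iff_two_le.mpr (by omega)
  obtain ⟨p, hp⟩ := exists_ne m
  have e := psi_one h0 hp (hm p (Finset.mem_univ _))
  apply Finset.sum_pos' (fun r _ => mul_nonneg (psi_nonneg k s r) (h0 r))
  exact ⟨m, Finset.mem_univ _, by rw [e, one_mul]; exact hmpos⟩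

lemma Fmap_nonneg {k : ℕ} {s : Fin (k+1) → ℝ} (h0 : ∀ q, 0 ≤ s q) (q : Fin (k+1)) :
    0 ≤ Fmap k s q :=
  div_nonneg (mul_nonneg (psi_nonneg k s q) (h0 q))
    (Finset.sum_nonneg fun r _ => mul_nonneg (psi_nonneg k s r) (h0 r))

lemma Fmap_sum {k : ℕ} (hk : 1 ≤ k) {s : Fin (k+1) → ℝ} (h0 : ∀ q, 0 ≤ s q)
    (h1 : ∑ q, s q = 1) : ∑ q, Fmap k s q = 1 := by
  unfold Fmap
  rw [← Finset.sum_div, div_self (den_pos hk h0 h1).ne']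

lemma psi_perm (k : ℕ) (τ : Equiv.Perm (Fin (k+1))) (s s' : Fin (k+1) → ℝ)
    (h : ∀ q, s' (τ q) = s q) (q : Fin (k+1)) : psi k s' (τ q) = psi k s q := by
  unfold psi
  congr 1
  symm
  apply Finset.prod_bij (fun r _ => τ r)
  · intro r hr
    simpa using hr
  · intro a _ b _ hab
    exact τ.injective hab
  · intro b hb
    refine ⟨τ.symm b, ?_, by simp⟩
    simp only [Finset.mem_erase, Finset.mem_univ, and_true] at hb ⊢
    intro hh
    apply hb
    rw [← hh]
    simp
  · intro r _
    rw [h, h]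

lemma Fmap_perm (k : ℕ) (τ : Equiv.Perm (Fin (k+1))) (s s' : Fin (k+1) → ℝ)
    (h : ∀ q, s' (τ q) = s q) (q : Fin (k+1)) : Fmap k s' (τ q) = Fmap k s q := by
  unfold Fmap
  rw [psi_perm k τ s s' h, h, ← Equiv.sum_comp τ]
  simp only [psi_perm k τ s s' h, h]

/-- the map -/
def phiMap (k : ℕ) (x : Fin k → ℝ) : Fin k → ℝ :=
  ∑ q, Fmap k (baryCoord k x) q • vtx k q

lemma chi_contDiffAt (k : ℕ) (x : Fin k → ℝ) (r q : Fin (k+1))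
    (h : baryCoord k x r + baryCoord k x q ≠ 0) :
    ContDiffAt ℝ (⊤ : ℕ∞) (fun x => chi (baryCoord k x r) (baryCoord k x q)) x := by
  unfold chi
  have hr := (bary_contDiff k r).contDiffAt (x := x)
  have hq := (bary_contDiff k q).contDiffAt (x := x)
  exact Real.smoothTransition.contDiffAt.comp x
    (contDiffAt_const.mul ((hr.sub hq).div (hr.add hq) h))

lemma psi_contDiffAt (k : ℕ) (x : Fin k → ℝ) (q : Fin (k+1))
    (h : ∀ r, r ≠ q → baryCoord k x r + baryCoord k x q ≠ 0) :
    ContDiffAt ℝ (⊤ : ℕ∞) (fun x => psi k (baryCoord k x) q) x := by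
  unfold psi
  apply contDiffAt_const.sub
  apply contDiffAt_prod
  intro r hr
  exact chi_contDiffAt k x r q (h r (Finset.ne_of_mem_erase hr))

lemma phi_contDiffAt {k : ℕ} (hk : 1 ≤ k) (x : Fin k → ℝ) (hx : x ∈ simplexSet k)
    (hs : x ∉ skel k) : ContDiffAt ℝ (⊤ : ℕ∞) (phiMap k) x := by
  have h0 := bary_nonneg k x hx
  have h1 := bary_sum k x
  have key : ∀ q r, r ≠ q → baryCoord k x r + baryCoord k x q ≠ 0 := by
    intro q r hrq hz
    have hr : baryCoord k x r = 0 := by linarith [h0 r, h0 q]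
    have hq : baryCoord k x q = 0 := by linarith [h0 r, h0 q]
    apply hs
    unfold skel
    simp only [mem_iUnion]
    refine ⟨(Finset.univ.erase q).erase r, ?_, ?_⟩
    · rw [Finset.card_erase_of_mem (by simp [hrq]), Finset.card_erase_of_mem (by simp)]
      simp
    · have := comb_mem_hull k ((Finset.univ.erase q).erase r) (baryCoord k x) h0 h1 (by
        intro p hp
        by_cases e : p = r
        · rw [e, hr]
        · by_cases e' : p = q
          · rw [e', hq]
          · exact absurd (by simp [e, e']) hp)
      rwa [comb_bary] at this
  have hn : ∀ q, ContDiffAt ℝ (⊤ : ℕ∞)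
      (fun x => psi k (baryCoord k x) q * baryCoord k x q) x := fun q =>
    (psi_contDiffAt k x q (key q)).mul (bary_contDiff k q).contDiffAt
  unfold phiMap Fmap
  apply ContDiffAt.sum
  intro q _
  exact ((hn q).div (ContDiffAt.sum fun r _ => hn r) (den_pos hk h0 h1).ne').smul contDiffAt_const

lemma num_cont (k : ℕ) (q : Fin (k+1)) : ContinuousOn
    (fun x => psi k (baryCoord k x) q * baryCoord k x q) (simplexSet k) := by
  intro x hx
  have h0 := bary_nonneg k x hx
  have hb : ContinuousAt (fun x => baryCoord k x q) x := (bary_contDiff k q).continuous.continuousAt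
  apply ContinuousAt.continuousWithinAt
  rcases (h0 q).eq_or_lt with hq | hq
  · have : Filter.Tendsto (fun x => psi k (baryCoord k x) q * baryCoord k x q) (nhds x)
        (nhds 0) := by
      apply squeeze_zero_norm (a := fun x => |baryCoord k x q|)
      · intro y
        rw [norm_mul, Real.norm_eq_abs, Real.norm_eq_abs, abs_of_nonneg (psi_nonneg _ _ _)]
        exact mul_le_of_le_one_left (abs_nonneg _) (psi_le_one _ _ _)
      · have := hb.abs
        unfold ContinuousAt at this
        simpa [← hq] using this
    unfold ContinuousAt
    simpa [← hq] using this
  · refine (psi_contDiffAt k x q ?_).continuousAt.mul hb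
    intro r _
    linarith [h0 r]

lemma phi_cont {k : ℕ} (hk : 1 ≤ k) : ContinuousOn (phiMap k) (simplexSet k) := by
  unfold phiMap Fmap
  apply continuousOn_finsetSum
  intro q _
  refine ((num_cont k q).div (continuousOn_finsetSum _ fun r _ => num_cont k r) ?_).smul
    continuousOn_const
  intro x hx
  exact (den_pos hk (bary_nonneg k x hx) (bary_sum k x)).ne'

lemma Upk_bary (k : ℕ) (p : Fin (k+1)) (x : Fin k → ℝ) (hx : x ∈ Upk k p) :
    0 ≤ baryCoord k x p ∧
      ∀ q, q ≠ p → ((k : ℝ) + 2) * baryCoord k x p < baryCoord k x q := by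
  obtain ⟨t, hp, hq, h1, rfl⟩ := hx
  have hk0 : (0 : ℝ) < (k : ℝ) + 1 := by positivity
  set c : ℝ := ((k : ℝ) + 1)⁻¹ with hc
  have hc0 : 0 < c := inv_pos.mpr hk0
  have hck : c * ((k : ℝ) + 1) = 1 := inv_mul_cancel₀ hk0.ne'
  let w : Fin (k+1) → ℝ := fun q =>
    t p * (c * (c + if q = p then 0 else 1)) + if q = p then 0 else t q
  have er : ∀ f : Fin (k+1) → ℝ, ∀ g : Fin (k+1) → (Fin k → ℝ),
      ∑ q, (if q = p then 0 else f q) • g q = ∑ q ∈ Finset.univ.erase p, f q • g q := by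
    intro f g
    rw [← Finset.add_sum_erase _ _ (Finset.mem_univ p)]
    simp only [if_true, zero_smul, zero_add]
    apply Finset.sum_congr rfl
    intro q hq
    rw [if_neg (Finset.ne_of_mem_erase hq)]
  have ew : t p • bary' k p + ∑ q ∈ Finset.univ.erase p, t q • vtx k q
      = ∑ q, w q • vtx k q := by
    simp only [w, add_smul, Finset.sum_add_distrib, mul_smul, ← Finset.smul_sum, er]
    simp [bary', simplexBary, hc]
  have sw : ∑ q, w q = 1 := by
    have e1 : ∑ q : Fin (k+1), (if q = p then (0:ℝ) else 1) = k := by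
      rw [← Finset.add_sum_erase _ _ (Finset.mem_univ p)]
      rw [Finset.sum_congr rfl (g := fun _ => (1:ℝ))
        (fun q hq => if_neg (Finset.ne_of_mem_erase hq))]
      simp
    have e2 : ∑ q : Fin (k+1), (if q = p then (0:ℝ) else t q) = 1 - t p := by
      rw [← h1, ← Finset.add_sum_erase _ t (Finset.mem_univ p),
        ← Finset.add_sum_erase _ _ (Finset.mem_univ p)]
      rw [Finset.sum_congr rfl (g := t)
        (fun q hq => if_neg (Finset.ne_of_mem_erase hq))]
      simp
    simp only [w, Finset.sum_add_distrib, ← Finset.mul_sum, e1, e2]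
    simp only [Finset.sum_const, Finset.card_univ, Fintype.card_fin, nsmul_eq_mul]
    push_cast
    linear_combination (t p * (c + 1)) * hck
  rw [ew]
  simp only [bary_comb k w sw]
  refine ⟨?_, ?_⟩
  · simp only [w, if_true]
    positivity
  · intro q hqp
    simp only [w, if_true, if_neg hqp]
    have := hq q hqp
    have e : t p * (c * (c + 1)) - (k + 2) * (t p * (c * (c + 0)) + 0) = 0 := by
      linear_combination (- t p * c) * hck
    linarith

lemma phi_Upk {k : ℕ} (hk : 1 ≤ k) (p : Fin (k+1)) (x : Fin k → ℝ) (hx : x ∈ Upk k p) :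
    phiMap k x = projFace k p x := by
  obtain ⟨hp, hq⟩ := Upk_bary k p x hx
  have h1 := bary_sum k x
  set s := baryCoord k x with hs
  have hk1 : (1 : ℝ) ≤ k := by exact_mod_cast hk
  have h3 : ∀ q, q ≠ p → 3 * s p ≤ s q := fun q h => by nlinarith [hq q h]
  have hpos : ∀ q, q ≠ p → 0 < s q := fun q h => by nlinarith [hq q h]
  have h0 : ∀ q, 0 ≤ s q := fun q => by
    by_cases h : q = p
    · rw [h]; exact hp
    · exact (hpos q h).le
  have ep : psi k s p = 0 := by
    unfold psi
    rw [Finset.prod_eq_one, sub_self]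
    intro r hr
    have := Finset.ne_of_mem_erase hr
    exact chi_one (hpos r this) hp (h3 r this)
  have eq1 : ∀ q, q ≠ p → psi k s q = 1 := fun q h =>
    psi_one h0 (Ne.symm h) (by linarith [h3 q h])
  have eden : ∑ r, psi k s r * s r = 1 - s p := by
    rw [← h1, ← Finset.add_sum_erase _ s (Finset.mem_univ p),
        ← Finset.add_sum_erase _ _ (Finset.mem_univ p)]
    rw [Finset.sum_congr rfl (g := s)
        (fun q hq => by rw [eq1 q (Finset.ne_of_mem_erase hq), one_mul]), ep]
    ring
  unfold phiMap projFace Fmap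
  rw [← hs, eden]
  have ex : x - s p • vtx k p = ∑ q ∈ Finset.univ.erase p, s q • vtx k q := by
    conv_lhs => rw [← comb_bary k x, ← hs]
    rw [← Finset.add_sum_erase _ _ (Finset.mem_univ p)]
    simp
  rw [ex, ← Finset.add_sum_erase _ _ (Finset.mem_univ p), ep, Finset.smul_sum]
  simp only [zero_mul, zero_div, zero_smul, zero_add]
  apply Finset.sum_congr rfl
  intro q hq
  rw [eq1 q (Finset.ne_of_mem_erase hq), smul_smul, one_mul, div_eq_inv_mul]

lemma permAct_eq (k : ℕ) (τ : Equiv.Perm (Fin (k+1))) (x : Fin k → ℝ) :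
    permAct k τ x = ∑ q, baryCoord k x (τ.symm q) • vtx k q := by
  unfold permAct
  rw [← Equiv.sum_comp τ (fun q => baryCoord k x (τ.symm q) • vtx k q)]
  simp

lemma bary_permAct (k : ℕ) (τ : Equiv.Perm (Fin (k+1))) (x : Fin k → ℝ) (q : Fin (k+1)) :
    baryCoord k (permAct k τ x) (τ q) = baryCoord k x q := by
  rw [permAct_eq, bary_comb k (fun q => baryCoord k x (τ.symm q))]
  · simp
  · rw [Equiv.sum_comp τ.symm (fun q => baryCoord k x q)]
    exact bary_sum k x

lemma phi_perm {k : ℕ} (hk : 1 ≤ k) (τ : Equiv.Perm (Fin (k+1))) (x : Fin k → ℝ)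
    (hx : x ∈ simplexSet k) : phiMap k (permAct k τ x) = permAct k τ (phiMap k x) := by
  have e : ∀ q, baryCoord k (phiMap k x) q = Fmap k (baryCoord k x) q :=
    bary_comb k _ (Fmap_sum hk (bary_nonneg k x hx) (bary_sum k x))
  unfold permAct
  simp only [e]
  change phiMap k (permAct k τ x) = _
  unfold phiMap
  rw [← Equiv.sum_comp τ]
  apply Finset.sum_congr rfl
  intro q _
  rw [Fmap_perm k τ (baryCoord k x) _ (bary_permAct k τ x)]

theorem exists_phi
    (k : ℕ) (hk : 1 ≤ k) :
    ∃ φ : (Fin k → ℝ) → (Fin k → ℝ),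
      ContinuousOn φ (simplexSet k) ∧
      Set.MapsTo φ (simplexSet k) (simplexSet k) ∧
      (∀ x ∈ simplexSet k \ skel k, ContDiffWithinAt ℝ (⊤ : ℕ∞) φ (simplexSet k) x) ∧
      (∀ (p : Fin (k+1)) (x : Fin k → ℝ), x ∈ Upk k p → φ x = projFace k p x) ∧
      (∀ (τ : Equiv.Perm (Fin (k+1))) (x : Fin k → ℝ), x ∈ simplexSet k →
        φ (permAct k τ x) = permAct k τ (φ x)) := by
  refine ⟨phiMap k, phi_cont hk, ?_, ?_, phi_Upk hk, phi_perm hk⟩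
  · intro x hx
    exact comb_mem k _ (Fmap_nonneg (bary_nonneg k x hx))
      (Fmap_sum hk (bary_nonneg k x hx) (bary_sum k x))
  · intro x hx
    exact (phi_contDiffAt hk x hx.1 hx.2).contDiffWithinAt

end
end
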